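/- Let K be a field of characteristic 0. Let P be a multilinear polynomial of degree 5 in one formal bilinear operation such that, in every alternative dialgebra over K, P vanishes identically when the formal operation is interpreted as the dicommutator ⟨a,b⟩ = a ⊣ b − b ⊢ a. Then P vanishes identically in every Malcev dialgebra over K; in other words, there are no special identities for Malcev dialgebras in degree 5. -/

import Mathlib

/-!
In a dialgebra monomial formed with the dicommutator, one variable is distinguished: the leftmost
one, its center. Testing `P` on the dialgebras `A × A`, with `A` alternative and the center carried
by the second factor, shows that for each `i` the part of `P` with center `x_i` is a commutator
identity of alternative algebras. Conversely, a Malcev dialgebra `M` acts on itself from the right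
through a Malcev ring, and in the split null extension of that ring by `M` the bimodule component of
a monomial with center `x_i` is its value in `M`. This reduces the problem to the absence of special
identities for Malcev algebras in degree five.

There, all multilinear monomials are determined by the words `(J(a, b, c) d) e`, with `J` the
Jacobian, and the left-normed words starting with `x₀`; the free associative algebra separates the
left-normed words while killing Jacobians, and the split octonions separate the words
`(J(a, b, c) d) e`. Only divisions by 2 and 3 are needed.
-/

/-- Formal monomials of a single binary operation in variables `x_0, …, x_{n-1}`:
binary trees whose leaves are labelled by variables. -/
inductive BTree (n : ℕ) : Type
  | leaf : Fin n → BTree n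
  | node : BTree n → BTree n → BTree n

namespace BTree

/-- Evaluate a monomial in an algebra with binary operation `m`,
assigning the value `x i` to the variable `i`. -/
def eval {n : ℕ} {V : Type} (m : V → V → V) (x : Fin n → V) : BTree n → V
  | leaf i => x i
  | node s t => m (eval m x s) (eval m x t)

/-- The multiset of variables occurring in a monomial. -/
def vars {n : ℕ} : BTree n → Multiset (Fin n)
  | leaf i => {i}
  | node s t => vars s + vars t

/-- A monomial of degree `n` is multilinear if each of the `n` variables
occurs in it exactly once. -/
def Multilinear {n : ℕ} (t : BTree n) : Prop :=
  vars t = (Finset.univ : Finset (Fin n)).val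

end BTree

/-! ### Malcev rings and alternative rings -/

/-- The Jacobian of three elements, which vanishes identically in a Lie ring. -/
def jacobian {V : Type*} [NonUnitalNonAssocRing V] (a b c : V) : V :=
  a * b * c + b * c * a + c * a * b

/-- A Malcev ring: an anticommutative nonassociative ring satisfying Sagle's identity. -/
class IsMalcev (V : Type*) [NonUnitalNonAssocRing V] : Prop where
  anticomm (a b : V) : a * b = -(b * a)
  sagle (a b c d : V) :
    a * b * c * d + b * c * d * a + c * d * a * b + d * a * b * c = a * c * (b * d)

/-- An alternative ring: the associator vanishes when two adjacent arguments coincide. -/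
class IsAlternative (A : Type*) [NonUnitalNonAssocRing A] : Prop where
  associator_self_left (a b : A) : associator a a b = 0
  associator_self_right (a b : A) : associator a b b = 0

theorem sagle_defect_eq_jacobian {V : Type*} [NonUnitalNonAssocRing V]
    (anticomm : ∀ a b : V, a * b = -(b * a)) (a b c d : V) :
    a * b * c * d + b * c * d * a + c * d * a * b + d * a * b * c - a * c * (b * d) =
      jacobian b c d * a + jacobian d a b * c + jacobian (a * b) c d + jacobian (c * d) a b
        - jacobian a c (b * d) := by
  simp only [jacobian, add_mul, anticomm d (a * b), anticomm b (c * d), anticomm c (b * d),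
    anticomm (c * d) (a * b), anticomm d b, neg_mul]
  abel

/-- The ring `A⁻` on the additive group of a nonassociative ring `A` whose product is the
commutator. -/
def CommutatorAlgebra (A : Type*) : Type _ := A

namespace CommutatorAlgebra

variable {A : Type*} [NonUnitalNonAssocRing A]

instance : AddCommGroup (CommutatorAlgebra A) := inferInstanceAs (AddCommGroup A)

/-- The identity map from a ring to its commutator ring. -/
def of : A ≃+ CommutatorAlgebra A := AddEquiv.refl A

instance : Mul (CommutatorAlgebra A) := ⟨fun a b ↦ of ⁅of.symm a, of.symm b⁆⟩

theorem of_mul_of (a b : A) : of a * of b = of ⁅a, b⁆ := rfl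

theorem mul_def (a b : CommutatorAlgebra A) : a * b = of ⁅of.symm a, of.symm b⁆ := rfl

instance : NonUnitalNonAssocRing (CommutatorAlgebra A) where
  left_distrib a b c := by
    simp only [mul_def, Ring.lie_def, map_add, map_sub, mul_add, add_mul]
    abel
  right_distrib a b c := by
    simp only [mul_def, Ring.lie_def, map_add, map_sub, mul_add, add_mul]
    abel
  zero_mul a := by simp [mul_def, Ring.lie_def]
  mul_zero a := by simp [mul_def, Ring.lie_def]

theorem mul_anticomm (a b : CommutatorAlgebra A) : a * b = -(b * a) := by
  simp [mul_def, Ring.lie_def]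

end CommutatorAlgebra

section Alternative

open CommutatorAlgebra

variable {A : Type*} [NonUnitalNonAssocRing A] [IsAlternative A]

theorem associator_swap_left (a b c : A) : associator b a c = -associator a b c := by
  have h := IsAlternative.associator_self_left (a + b) c
  simp only [← AddMonoidHom.associator_apply, map_add, AddMonoidHom.add_apply] at h
  simp only [AddMonoidHom.associator_apply, IsAlternative.associator_self_left] at h
  linear_combination (norm := abel) h

theorem associator_swap_right (a b c : A) : associator a c b = -associator a b c := by
  have h := IsAlternative.associator_self_right a (b + c)
  simp only [← AddMonoidHom.associator_apply, map_add, AddMonoidHom.add_apply] at h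
  simp only [AddMonoidHom.associator_apply, IsAlternative.associator_self_right] at h
  linear_combination (norm := abel) h

theorem associator_rotate (a b c : A) : associator b c a = associator a b c := by
  rw [associator_swap_right, associator_swap_left, neg_neg]

theorem jacobian_of (a b c : A) :
    jacobian (of a) (of b) (of c) = of (6 • associator a b c) := by
  have h : ⁅⁅a, b⁆, c⁆ + ⁅⁅b, c⁆, a⁆ + ⁅⁅c, a⁆, b⁆ =
      associator a b c + associator b c a + associator c a b
        - associator b a c - associator a c b - associator c b a := by
    simp only [Ring.lie_def, associator_apply, mul_sub, sub_mul]
    abel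
  have hcab : associator c a b = associator a b c := (associator_rotate c a b).symm
  rw [hcab, associator_rotate a b c, associator_swap_left a b c, associator_swap_right a b c,
    associator_swap_right c a b, hcab] at h
  simp only [jacobian, of_mul_of, ← map_add, h]
  congr 1
  abel

/-- Kleinfeld's function, measuring the failure of the associator to be a derivation in its first
argument. -/
def kleinfeld (a b c d : A) : A :=
  associator (a * b) c d - b * associator a c d - associator b c d * a

theorem kleinfeld_swap_right (a b c d : A) : kleinfeld a b d c = -kleinfeld a b c d := by
  simp only [kleinfeld, associator_swap_right _ c d, mul_neg, neg_mul]
  abel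

theorem kleinfeld_sub_add (a b c d : A) :
    kleinfeld a b c d - kleinfeld b c d a + kleinfeld c d a b =
      ⁅a, associator b c d⁆ - ⁅b, associator a c d⁆ + ⁅c, associator a b d⁆
        - ⁅d, associator a b c⁆ := by
  have h := associator_cocycle a b c d
  rw [← associator_rotate a (b * c) d, associator_rotate (c * d) a b] at h
  simp only [kleinfeld, Ring.lie_def, associator_rotate a b c, associator_rotate b c a,
    associator_rotate a b d, associator_rotate b d a, associator_rotate a c d]
  linear_combination (norm := abel) -h

theorem kleinfeld_rotate (a b c d : A) : kleinfeld d a b c = -kleinfeld a b c d := by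
  have h := kleinfeld_sub_add a b c d
  have h' := kleinfeld_sub_add b c d a
  rw [associator_rotate a b c, associator_rotate a b d, associator_rotate a c d] at h'
  linear_combination (norm := abel) h + h'

theorem kleinfeld_swap_pairs (a b c d : A) : kleinfeld c d a b = kleinfeld a b c d := by
  rw [kleinfeld_rotate d a b c, kleinfeld_rotate a b c d, neg_neg]

theorem kleinfeld_swap_left (a b c d : A) : kleinfeld b a c d = -kleinfeld a b c d := by
  rw [kleinfeld_rotate a c d b, kleinfeld_rotate c d b a, neg_neg, kleinfeld_swap_right,
    kleinfeld_swap_pairs]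

theorem three_smul_kleinfeld (a b c d : A) :
    3 • kleinfeld a b c d =
      ⁅a, associator b c d⁆ - ⁅b, associator a c d⁆ + ⁅c, associator a b d⁆
        - ⁅d, associator a b c⁆ := by
  rw [← kleinfeld_sub_add, kleinfeld_swap_pairs, kleinfeld_rotate c d a b, kleinfeld_swap_pairs]
  abel

theorem associator_lie (a b c d : A) :
    associator ⁅a, b⁆ c d =
      2 • kleinfeld a b c d - ⁅a, associator b c d⁆ + ⁅b, associator a c d⁆ := by
  have h := kleinfeld_swap_left a b c d
  have hs : associator ⁅a, b⁆ c d = associator (a * b) c d - associator (b * a) c d := by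
    simp only [Ring.lie_def, associator_apply, sub_mul]
    abel
  rw [hs]
  simp only [kleinfeld, Ring.lie_def] at h ⊢
  linear_combination (norm := abel) - h

theorem sagle_defect_associator (a b c d : A) :
    ⁅associator b c d, a⁆ + ⁅associator a b d, c⁆ + associator ⁅a, b⁆ c d
      + associator ⁅c, d⁆ a b - associator a c ⁅b, d⁆ = 0 := by
  have hbdac : kleinfeld b d a c = -kleinfeld a b c d := by
    rw [kleinfeld_swap_right, kleinfeld_rotate d c a b, neg_neg, kleinfeld_swap_left,
      kleinfeld_swap_pairs]
  have h := three_smul_kleinfeld a b c d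
  rw [← associator_rotate a c ⁅b, d⁆, ← associator_rotate c ⁅b, d⁆ a, associator_lie a b,
    associator_lie c d, associator_lie b d, hbdac, kleinfeld_swap_pairs a b c d,
    ← associator_rotate c a b, ← associator_rotate d a b, ← associator_rotate d a c,
    associator_swap_left a b c]
  simp only [Ring.lie_def, mul_neg, neg_mul] at h ⊢
  linear_combination (norm := abel) (2 : ℤ) • h

instance : IsMalcev (CommutatorAlgebra A) where
  anticomm := mul_anticomm
  sagle x y z w := by
    obtain ⟨a, rfl⟩ := of.surjective x
    obtain ⟨b, rfl⟩ := of.surjective y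
    obtain ⟨c, rfl⟩ := of.surjective z
    obtain ⟨d, rfl⟩ := of.surjective w
    rw [← sub_eq_zero, sagle_defect_eq_jacobian mul_anticomm]
    simp only [of_mul_of, jacobian_of, ← associator_rotate d a b]
    rw [← of.map_zero, ← smul_zero 6, ← sagle_defect_associator a b c d]
    simp only [← map_add, ← map_sub, Ring.lie_def, smul_add, smul_sub, mul_smul_comm,
      smul_mul_assoc]

end Alternative

/-! ### Normal forms in degree five -/

section NormalForms

variable {V : Type*} [NonUnitalNonAssocRing V]

/-- The monomial `(((x_a x_b) x_c) x_d) x_e`. -/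
def leftNormed (x : Fin 5 → V) (a b c d e : Fin 5) : V := x a * x b * x c * x d * x e

/-- The monomial `((x_a x_b) x_c) (x_d x_e)`. -/
def threeTwo (x : Fin 5 → V) (a b c d e : Fin 5) : V := x a * x b * x c * (x d * x e)

/-- The monomial `((x_a x_b) (x_c x_d)) x_e`. -/
def twoTwoOne (x : Fin 5 → V) (a b c d e : Fin 5) : V := x a * x b * (x c * x d) * x e

/-- The polynomial `(J(x_a, x_b, x_c) x_d) x_e`. -/
def jacobianWord (x : Fin 5 → V) (a b c d e : Fin 5) : V :=
  jacobian (x a) (x b) (x c) * x d * x e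

theorem jacobianWord_eq (x : Fin 5 → V) (a b c d e : Fin 5) :
    jacobianWord x a b c d e =
      leftNormed x a b c d e + leftNormed x b c a d e + leftNormed x c a b d e := by
  simp only [jacobianWord, jacobian, leftNormed, add_mul]

/-- An additive group without elements of order 2 or 3: the condition under which the relations
among the values of degree five monomials can be solved. -/
class IsSixTorsionFree (W : Type*) [AddCommGroup W] : Prop where
  eq_zero_of_six_nsmul (w : W) : 6 • w = 0 → w = 0

namespace IsSixTorsionFree

theorem of_six_ne_zero {K : Type*} (W : Type*) [Field K] [AddCommGroup W] [Module K W]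
    (h6 : (6 : K) ≠ 0) : IsSixTorsionFree W where
  eq_zero_of_six_nsmul w h := by
    rw [← ofNat_smul_eq_nsmul K] at h
    exact (smul_eq_zero_iff_right h6).1 h

variable {W : Type*} [AddCommGroup W] [IsSixTorsionFree W] {w : W}

theorem eq_zero_of_two_nsmul (h : 2 • w = 0) : w = 0 :=
  eq_zero_of_six_nsmul w (by rw [show 6 = 3 * 2 from rfl, mul_smul, h, smul_zero])

theorem eq_zero_of_three_nsmul (h : 3 • w = 0) : w = 0 :=
  eq_zero_of_six_nsmul w (by rw [show 6 = 2 * 3 from rfl, mul_smul, h, smul_zero])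

end IsSixTorsionFree

/-- An additive map kills the normal forms in `x` if it vanishes on all multilinear
`(J(x_a, x_b, x_c) x_d) x_e` and on all left-normed multilinear words starting with `x 0`. -/
structure KillsNormalForms {W : Type*} [AddCommGroup W] (π : V →+ W) (x : Fin 5 → V) : Prop where
  jacobian : ∀ a b c d e, [a, b, c, d, e].Nodup → π (jacobianWord x a b c d e) = 0
  leftNormed_zero : ∀ b c d e, [0, b, c, d, e].Nodup → π (leftNormed x 0 b c d e) = 0

section Malcev

variable [IsMalcev V] (x : Fin 5 → V) (a b c d e : Fin 5)

theorem leftNormed_swap : leftNormed x b a c d e = -leftNormed x a b c d e := by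
  simp only [leftNormed, IsMalcev.anticomm (x b), neg_mul]

theorem threeTwo_swap_left : threeTwo x b a c d e = -threeTwo x a b c d e := by
  simp only [threeTwo, IsMalcev.anticomm (x b), neg_mul]

theorem threeTwo_swap_right : threeTwo x a b c e d = -threeTwo x a b c d e := by
  simp only [threeTwo, IsMalcev.anticomm (x e), mul_neg]

theorem twoTwoOne_swap : twoTwoOne x b a c d e = -twoTwoOne x a b c d e := by
  simp only [twoTwoOne, IsMalcev.anticomm (x b), neg_mul]

theorem twoTwoOne_swap_pairs : twoTwoOne x c d a b e = -twoTwoOne x a b c d e := by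
  simp only [twoTwoOne, IsMalcev.anticomm (x c * x d), neg_mul]

theorem twoTwoOne_eq_leftNormed :
    twoTwoOne x a b c d e =
      leftNormed x a c b d e + leftNormed x c b d a e + leftNormed x b d a c e
        + leftNormed x d a c b e := by
  simp only [twoTwoOne, leftNormed, ← IsMalcev.sagle, add_mul]

theorem threeTwo_eq_leftNormed :
    threeTwo x a b d c e =
      leftNormed x a b c d e - leftNormed x a b e c d + threeTwo x c d e a b
        + twoTwoOne x d e a b c := by
  simp only [threeTwo, twoTwoOne, leftNormed, ← IsMalcev.sagle (x a * x b) (x c) (x d) (x e),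
    IsMalcev.anticomm (x e) (x a * x b), neg_mul]
  abel

end Malcev

namespace KillsNormalForms

variable {W : Type*} [AddCommGroup W] {π : V →+ W} {x : Fin 5 → V}
variable {a b c d e : Fin 5}

theorem map_leftNormed_cycle (h : KillsNormalForms π x) (hn : [a, b, c, d, e].Nodup) :
    π (leftNormed x a b c d e) + π (leftNormed x b c a d e) + π (leftNormed x c a b d e) = 0 := by
  rw [← map_add, ← map_add, ← jacobianWord_eq, h.jacobian _ _ _ _ _ hn]

theorem map_leftNormed_zero_first (h : KillsNormalForms π x) (hn : [a, b, c, d, 0].Nodup) :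
    π (leftNormed x 0 a b c d) = 0 :=
  h.leftNormed_zero a b c d (by grind)

variable [IsMalcev V]

theorem map_leftNormed_zero_second (h : KillsNormalForms π x) (hn : [a, b, c, d, 0].Nodup) :
    π (leftNormed x a 0 b c d) = 0 := by
  rw [leftNormed_swap, map_neg, h.map_leftNormed_zero_first hn, neg_zero]

theorem map_leftNormed_zero_third (h : KillsNormalForms π x) (hn : [a, b, c, d, 0].Nodup) :
    π (leftNormed x a b 0 c d) = 0 := by
  have hJ := h.map_leftNormed_cycle (a := a) (b := b) (c := 0) (d := c) (e := d) (by grind)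
  rwa [h.map_leftNormed_zero_second (by grind), h.map_leftNormed_zero_first (by grind), add_zero,
    add_zero] at hJ

variable [IsSixTorsionFree W]

theorem map_leftNormed_zero_fourth (h : KillsNormalForms π x) (hn : [a, b, c, d, 0].Nodup) :
    π (leftNormed x a b c 0 d) = 0 := by
  have hT {a b c : Fin 5} (hn : [a, b, c, d, 0].Nodup) :
      π (twoTwoOne x a c b 0 d) = π (leftNormed x a b c 0 d) := by
    rw [twoTwoOne_eq_leftNormed, map_add, map_add, map_add,
      h.map_leftNormed_zero_third (by grind), h.map_leftNormed_zero_second (by grind),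
      h.map_leftNormed_zero_first (by grind), add_zero, add_zero, add_zero]
  have hswap {a b c : Fin 5} (hn : [a, b, c, d, 0].Nodup) :
      π (leftNormed x b c a 0 d) = π (leftNormed x a b c 0 d) := by
    rw [leftNormed_swap, map_neg, ← hT (by grind), twoTwoOne_swap, map_neg, hT (by grind), neg_neg]
  have hJ := h.map_leftNormed_cycle (a := a) (b := b) (c := c) (d := 0) (e := d) (by grind)
  rw [hswap (a := b) (by grind), hswap hn] at hJ
  refine IsSixTorsionFree.eq_zero_of_three_nsmul (.trans ?_ hJ)
  abel

theorem map_twoTwoOne_zero (h : KillsNormalForms π x) (hn : [a, b, c, d, 0].Nodup) :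
    π (twoTwoOne x 0 a b c d) = 0 := by
  rw [twoTwoOne_eq_leftNormed, map_add, map_add, map_add, h.map_leftNormed_zero_first (by grind),
    h.map_leftNormed_zero_fourth (by grind), h.map_leftNormed_zero_third (by grind),
    h.map_leftNormed_zero_second (by grind), add_zero, add_zero, add_zero]

theorem map_threeTwo_zero_fifth (h : KillsNormalForms π x) (hn : [a, b, c, d, 0].Nodup) :
    π (threeTwo x a b d c 0) = π (leftNormed x a b c d 0) + π (threeTwo x c d 0 a b) := by
  rw [threeTwo_eq_leftNormed, map_add, map_add, map_sub, h.map_leftNormed_zero_third (by grind),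
    twoTwoOne_swap, map_neg, h.map_twoTwoOne_zero (by grind), sub_zero, neg_zero, add_zero]

theorem map_threeTwo_zero_third (h : KillsNormalForms π x) (hn : [a, b, c, d, 0].Nodup) :
    π (threeTwo x a b 0 c d) = π (threeTwo x c 0 d a b) - π (leftNormed x a b d c 0) := by
  rw [threeTwo_eq_leftNormed, map_add, map_add, map_sub, h.map_leftNormed_zero_fourth (by grind),
    h.map_twoTwoOne_zero (by grind), zero_sub, add_zero]
  abel

theorem map_threeTwo_zero_second (h : KillsNormalForms π x) (hn : [a, b, c, d, 0].Nodup) :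
    π (threeTwo x c 0 b a d) = π (threeTwo x a b d c 0) := by
  rw [threeTwo_swap_left, map_neg, threeTwo_eq_leftNormed, map_add, map_add, map_sub,
    h.map_leftNormed_zero_first (by grind), h.map_leftNormed_zero_first (by grind),
    twoTwoOne_swap_pairs, map_neg, h.map_twoTwoOne_zero (by grind), threeTwo_swap_right, map_neg]
  abel

theorem map_threeTwo_zero_second_swap_middle (h : KillsNormalForms π x)
    (hn : [a, b, c, d, 0].Nodup) :
    π (threeTwo x c 0 a b d) = -π (threeTwo x c 0 b a d) := by
  rw [h.map_threeTwo_zero_second hn, h.map_threeTwo_zero_second (by grind), threeTwo_swap_left,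
    map_neg]

theorem map_leftNormed_sub_reverse (h : KillsNormalForms π x) (hn : [a, b, c, d, 0].Nodup) :
    π (leftNormed x a b c d 0) - π (leftNormed x c d b a 0) =
      π (threeTwo x c 0 b a d) - π (threeTwo x a 0 b c d) := by
  rw [h.map_threeTwo_zero_second hn, h.map_threeTwo_zero_fifth hn,
    h.map_threeTwo_zero_third (by grind)]
  abel

theorem map_threeTwo_zero_second_reverse (h : KillsNormalForms π x)
    (hn : [a, b, c, d, 0].Nodup) :
    π (threeTwo x a 0 d c b) = -π (threeTwo x a 0 b c d) := by
  rw [h.map_threeTwo_zero_second_swap_middle (by grind), threeTwo_swap_right, map_neg, neg_neg,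
    h.map_threeTwo_zero_second_swap_middle (by grind)]

theorem map_leftNormed_zero_fifth_swap_right (h : KillsNormalForms π x)
    (hn : [a, b, c, d, 0].Nodup) :
    π (leftNormed x a b d c 0) = -π (leftNormed x a b c d 0) := by
  have hpairs {a b c d : Fin 5} (hn : [a, b, c, d, 0].Nodup) :
      π (leftNormed x a b c d 0) + π (leftNormed x a b d c 0) =
        π (leftNormed x c d a b 0) + π (leftNormed x c d b a 0) := by
    have habcd := h.map_leftNormed_sub_reverse hn
    have hcdab := h.map_leftNormed_sub_reverse (a := c) (b := d) (c := a) (d := b) (by grind)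
    rw [h.map_threeTwo_zero_second_reverse (a := a) (b := b) (by grind),
      h.map_threeTwo_zero_second_reverse (a := c) (b := b) (by grind)] at hcdab
    linear_combination (norm := abel) habcd - hcdab
  have habdc := hpairs (a := a) (b := b) (c := d) (d := c) (by grind)
  simp only [leftNormed_swap x c d, map_neg] at habdc
  refine add_eq_zero_iff_eq_neg.1 (IsSixTorsionFree.eq_zero_of_two_nsmul ?_)
  linear_combination (norm := abel) hpairs hn + habdc

theorem map_threeTwo_zero_second_swap_last (h : KillsNormalForms π x)
    (hn : [a, b, c, d, 0].Nodup) :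
    π (threeTwo x d 0 b c a) = -π (threeTwo x a 0 b c d) := by
  have had := h.map_threeTwo_zero_fifth (a := c) (b := b) (c := a) (d := d) (by grind)
  have hda := h.map_threeTwo_zero_fifth (a := c) (b := b) (c := d) (d := a) (by grind)
  rw [← h.map_threeTwo_zero_second (by grind)] at had hda
  rw [h.map_leftNormed_zero_fifth_swap_right (by grind), threeTwo_swap_left x a d,
    map_neg] at hda
  linear_combination (norm := abel) had + hda

theorem map_leftNormed_add_swap_pairs (h : KillsNormalForms π x) (hn : [a, b, c, d, 0].Nodup) :
    π (leftNormed x a b c d 0) + π (leftNormed x c d a b 0) = -2 • π (threeTwo x a 0 b c d) := by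
  have hrev := h.map_leftNormed_sub_reverse hn
  have hS : π (threeTwo x c 0 b a d) = -π (threeTwo x a 0 b c d) := by
    rw [threeTwo_swap_right, map_neg, h.map_threeTwo_zero_second_swap_last (by grind), neg_neg,
      threeTwo_swap_right, map_neg]
  rw [h.map_leftNormed_zero_fifth_swap_right (a := c) (b := d) (c := a) (by grind), hS] at hrev
  linear_combination (norm := abel) hrev

theorem map_threeTwo_zero_second_cycle (h : KillsNormalForms π x) (hn : [a, b, c, d, 0].Nodup) :
    π (threeTwo x b 0 c a d) = π (threeTwo x a 0 b c d) := by
  rw [threeTwo_swap_right, map_neg, h.map_threeTwo_zero_second_swap_last (by grind), neg_neg,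
    threeTwo_swap_right, map_neg, h.map_threeTwo_zero_second_swap_middle (by grind), neg_neg]

theorem map_leftNormed_zero_fifth_eq (h : KillsNormalForms π x) (hn : [a, b, c, d, 0].Nodup) :
    π (leftNormed x a b c d 0) = 2 • π (threeTwo x a 0 b c d) := by
  have hbca := h.map_leftNormed_cycle (a := b) (b := c) (c := a) (d := d) (e := 0) (by grind)
  have hadb := h.map_leftNormed_cycle (a := a) (b := d) (c := b) (d := c) (e := 0) (by grind)
  have hbcad := h.map_leftNormed_add_swap_pairs (a := b) (b := c) (c := a) (d := d) (by grind)
  have hcabd := h.map_leftNormed_add_swap_pairs (a := c) (b := a) (c := b) (d := d) (by grind)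
  have hc : π (threeTwo x c 0 a b d) = π (threeTwo x a 0 b c d) := by
    rw [h.map_threeTwo_zero_second_cycle (by grind), h.map_threeTwo_zero_second_cycle hn]
  rw [h.map_threeTwo_zero_second_cycle hn] at hbcad
  rw [hc, h.map_leftNormed_zero_fifth_swap_right (a := b) (c := a) (by grind),
    ← map_neg, ← leftNormed_swap] at hcabd
  rw [leftNormed_swap x a b, map_neg, h.map_leftNormed_zero_fifth_swap_right hn, neg_neg] at hadb
  refine sub_eq_zero.1 (IsSixTorsionFree.eq_zero_of_two_nsmul ?_)
  linear_combination (norm := abel) hbca - hbcad - hcabd + hadb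

theorem map_threeTwo_zero_second_eq_zero (h : KillsNormalForms π x)
    (hn : [a, b, c, d, 0].Nodup) : π (threeTwo x a 0 b c d) = 0 := by
  have hJ := h.map_leftNormed_cycle (a := a) (b := b) (c := c) (d := d) (e := 0) (by grind)
  have hc : π (threeTwo x c 0 a b d) = π (threeTwo x a 0 b c d) := by
    rw [h.map_threeTwo_zero_second_cycle (by grind), h.map_threeTwo_zero_second_cycle hn]
  rw [h.map_leftNormed_zero_fifth_eq hn, h.map_leftNormed_zero_fifth_eq (by grind),
    h.map_leftNormed_zero_fifth_eq (by grind), hc, h.map_threeTwo_zero_second_cycle hn] at hJ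
  refine IsSixTorsionFree.eq_zero_of_six_nsmul _ ?_
  linear_combination (norm := abel) hJ

theorem map_leftNormed_eq_zero (h : KillsNormalForms π x) (hn : [a, b, c, d, e].Nodup) :
    π (leftNormed x a b c d e) = 0 := by
  have h0 : a = 0 ∨ b = 0 ∨ c = 0 ∨ d = 0 ∨ e = 0 := by
    by_contra h0
    have := (List.nodup_cons.2 ⟨by grind, hn⟩ : [0, a, b, c, d, e].Nodup).length_le_card
    simp at this
  obtain rfl | rfl | rfl | rfl | rfl := h0
  · exact h.leftNormed_zero _ _ _ _ hn
  · exact h.map_leftNormed_zero_second (by grind)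
  · exact h.map_leftNormed_zero_third (by grind)
  · exact h.map_leftNormed_zero_fourth (by grind)
  · rw [h.map_leftNormed_zero_fifth_eq hn, h.map_threeTwo_zero_second_eq_zero hn, smul_zero]

theorem map_twoTwoOne_eq_zero (h : KillsNormalForms π x) (hn : [a, b, c, d, e].Nodup) :
    π (twoTwoOne x a b c d e) = 0 := by
  rw [twoTwoOne_eq_leftNormed, map_add, map_add, map_add, h.map_leftNormed_eq_zero (by grind),
    h.map_leftNormed_eq_zero (by grind), h.map_leftNormed_eq_zero (by grind),
    h.map_leftNormed_eq_zero (by grind), add_zero, add_zero, add_zero]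

theorem map_threeTwo_rotate (h : KillsNormalForms π x) (hn : [a, b, c, d, e].Nodup) :
    π (threeTwo x a b c d e) = π (threeTwo x d c e a b) := by
  rw [threeTwo_eq_leftNormed, map_add, map_add, map_sub, h.map_leftNormed_eq_zero (by grind),
    h.map_leftNormed_eq_zero (by grind), h.map_twoTwoOne_eq_zero (by grind), sub_zero,
    zero_add, add_zero]

theorem map_threeTwo_swap_middle (h : KillsNormalForms π x) (hn : [a, b, c, d, e].Nodup) :
    π (threeTwo x a b d c e) = -π (threeTwo x a b c d e) := by
  rw [h.map_threeTwo_rotate (by grind), threeTwo_swap_left, map_neg, ← h.map_threeTwo_rotate hn]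

theorem map_threeTwo_reverse (h : KillsNormalForms π x) (hn : [a, b, c, d, e].Nodup) :
    π (threeTwo x a b e d c) = -π (threeTwo x a b c d e) := by
  rw [h.map_threeTwo_swap_middle (by grind), threeTwo_swap_right, map_neg, neg_neg,
    h.map_threeTwo_swap_middle hn]

theorem map_threeTwo_swap_two_five (h : KillsNormalForms π x) (hn : [a, b, c, d, e].Nodup) :
    π (threeTwo x a e c d b) = -π (threeTwo x a b c d e) := by
  rw [threeTwo_swap_left, map_neg, ← h.map_threeTwo_reverse (by grind),
    ← h.map_threeTwo_rotate (by grind), h.map_threeTwo_swap_middle (by grind),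
    ← h.map_threeTwo_rotate hn]

theorem map_threeTwo_eq_zero (h : KillsNormalForms π x) (hn : [a, b, c, d, e].Nodup) :
    π (threeTwo x a b c d e) = 0 := by
  refine IsSixTorsionFree.eq_zero_of_two_nsmul ?_
  rw [two_nsmul, add_eq_zero_iff_eq_neg]
  calc
    π (threeTwo x a b c d e) = π (threeTwo x d c e a b) := h.map_threeTwo_rotate hn
    _ = π (threeTwo x c b e a d) := by
      rw [threeTwo_swap_left, map_neg, h.map_threeTwo_swap_two_five (by grind), neg_neg]
    _ = π (threeTwo x b c e d a) := by
      rw [threeTwo_swap_left, map_neg, threeTwo_swap_right, map_neg, neg_neg]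
    _ = π (threeTwo x a b e d c) := by
      rw [h.map_threeTwo_swap_two_five (by grind), threeTwo_swap_left, map_neg, neg_neg]
    _ = -π (threeTwo x a b c d e) := h.map_threeTwo_reverse hn

end KillsNormalForms
end NormalForms

namespace BTree

theorem card_vars_pos {n : ℕ} (t : BTree n) : 0 < t.vars.card := by
  induction t with
  | leaf i => simp [vars]
  | node s t hs ht => simp only [vars, Multiset.card_add]; omega

theorem exists_eq_leaf {n : ℕ} {t : BTree n} (h : t.vars.card = 1) : ∃ i, t = leaf i := by
  cases t with
  | leaf i => exact ⟨i, rfl⟩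
  | node s t =>
    simp only [vars, Multiset.card_add] at h
    have := s.card_vars_pos
    have := t.card_vars_pos
    omega

section Anticommutative

variable {V : Type} [NonUnitalNonAssocRing V] [IsMalcev V] {n : ℕ} (x : Fin n → V) {t : BTree n}

theorem exists_eval_eq_mul (h : 1 < t.vars.card) :
    ∃ (ε : ℤˣ) (s u : BTree n), t.vars = s.vars + u.vars ∧
      u.vars.card ≤ s.vars.card ∧ t.eval (· * ·) x = ε • (s.eval (· * ·) x * u.eval (· * ·) x) := by
  cases t with
  | leaf i => simp [vars] at h
  | node s u =>
    obtain hle | hle := le_total u.vars.card s.vars.card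
    · exact ⟨1, s, u, rfl, hle, (one_smul _ _).symm⟩
    · refine ⟨-1, u, s, add_comm _ _, hle, ?_⟩
      rw [Units.neg_smul, one_smul, ← IsMalcev.anticomm, eval]

theorem exists_eval_eq_of_card_two (h : t.vars.card = 2) :
    ∃ (ε : ℤˣ) (i j : Fin n), t.vars = {i} + {j} ∧ t.eval (· * ·) x = ε • (x i * x j) := by
  obtain ⟨ε, s, u, hv, hle, he⟩ := exists_eval_eq_mul x (t := t) (by omega)
  have hc := congrArg Multiset.card hv
  rw [Multiset.card_add] at hc
  have := u.card_vars_pos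
  obtain ⟨i, rfl⟩ := exists_eq_leaf (t := s) (by omega)
  obtain ⟨j, rfl⟩ := exists_eq_leaf (t := u) (by omega)
  exact ⟨ε, i, j, hv, he⟩

theorem exists_eval_eq_of_card_three (h : t.vars.card = 3) :
    ∃ (ε : ℤˣ) (i j k : Fin n),
      t.vars = {i} + {j} + {k} ∧ t.eval (· * ·) x = ε • (x i * x j * x k) := by
  obtain ⟨ε, s, u, hv, hle, he⟩ := exists_eval_eq_mul x (t := t) (by omega)
  have hc := congrArg Multiset.card hv
  rw [Multiset.card_add] at hc
  have := u.card_vars_pos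
  obtain ⟨ε', i, j, hs, hes⟩ := exists_eval_eq_of_card_two x (t := s) (by omega)
  obtain ⟨k, rfl⟩ := exists_eq_leaf (t := u) (by omega)
  exact ⟨ε * ε', i, j, k, by rw [hv, hs, vars], by rw [he, hes, smul_mul_assoc, smul_smul, eval]⟩

theorem exists_eval_eq_of_card_four (h : t.vars.card = 4) :
    ∃ (ε : ℤˣ) (i j k l : Fin n), t.vars = {i} + {j} + {k} + {l} ∧
      (t.eval (· * ·) x = ε • (x i * x j * x k * x l) ∨
        t.eval (· * ·) x = ε • (x i * x j * (x k * x l))) := by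
  obtain ⟨ε, s, u, hv, hle, he⟩ := exists_eval_eq_mul x (t := t) (by omega)
  have hc := congrArg Multiset.card hv
  rw [Multiset.card_add] at hc
  have := u.card_vars_pos
  obtain hs | hs : s.vars.card = 3 ∨ s.vars.card = 2 := by omega
  · obtain ⟨ε', i, j, k, hs, hes⟩ := exists_eval_eq_of_card_three x hs
    obtain ⟨l, rfl⟩ := exists_eq_leaf (t := u) (by omega)
    exact ⟨ε * ε', i, j, k, l, by rw [hv, hs, vars],
      .inl (by rw [he, hes, smul_mul_assoc, smul_smul, eval])⟩
  · obtain ⟨ε', i, j, hs, hes⟩ := exists_eval_eq_of_card_two x hs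
    obtain ⟨ε'', k, l, hu, heu⟩ := exists_eval_eq_of_card_two x (t := u) (by omega)
    exact ⟨ε * (ε' * ε''), i, j, k, l, by rw [hv, hs, hu]; ac_rfl,
      .inr (by rw [he, hes, heu, smul_mul_smul_comm, smul_smul])⟩

theorem exists_eval_eq_of_card_five (x : Fin 5 → V) {t : BTree 5} (h : t.vars.card = 5) :
    ∃ (ε : ℤˣ) (a b c d e : Fin 5), t.vars = {a} + {b} + {c} + {d} + {e} ∧
      (t.eval (· * ·) x = ε • leftNormed x a b c d e ∨
        t.eval (· * ·) x = ε • twoTwoOne x a b c d e ∨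
        t.eval (· * ·) x = ε • threeTwo x a b c d e) := by
  obtain ⟨ε, s, u, hv, hle, he⟩ := exists_eval_eq_mul x (t := t) (by omega)
  have hc := congrArg Multiset.card hv
  rw [Multiset.card_add] at hc
  have := u.card_vars_pos
  obtain hs | hs : s.vars.card = 4 ∨ s.vars.card = 3 := by omega
  · obtain ⟨ε', a, b, c, d, hs, hes⟩ := exists_eval_eq_of_card_four x hs
    obtain ⟨e, rfl⟩ := exists_eq_leaf (t := u) (by omega)
    refine ⟨ε * ε', a, b, c, d, e, by rw [hv, hs, vars], ?_⟩
    obtain hes | hes := hes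
    · exact .inl (by rw [he, hes, smul_mul_assoc, smul_smul, eval, leftNormed])
    · exact .inr (.inl (by rw [he, hes, smul_mul_assoc, smul_smul, eval, twoTwoOne]))
  · obtain ⟨ε', a, b, c, hs, hes⟩ := exists_eval_eq_of_card_three x hs
    obtain ⟨ε'', d, e, hu, heu⟩ := exists_eval_eq_of_card_two x (t := u) (by omega)
    exact ⟨ε * (ε' * ε''), a, b, c, d, e, by rw [hv, hs, hu]; ac_rfl,
      .inr (.inr (by rw [he, hes, heu, smul_mul_smul_comm, smul_smul, threeTwo]))⟩

end Anticommutative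

end BTree

theorem KillsNormalForms.map_eval_eq_zero {V W : Type} [NonUnitalNonAssocRing V] [IsMalcev V]
    [AddCommGroup W] [IsSixTorsionFree W] {π : V →+ W} {x : Fin 5 → V} (h : KillsNormalForms π x)
    {t : BTree 5} (ht : t.Multilinear) : π (t.eval (· * ·) x) = 0 := by
  obtain ⟨ε, a, b, c, d, e, hv, he⟩ :=
    t.exists_eval_eq_of_card_five x (by rw [show t.vars = _ from ht]; rfl)
  have hn : [a, b, c, d, e].Nodup := by
    have hnodup := (Finset.univ : Finset (Fin 5)).nodup
    rwa [← show t.vars = _ from ht, hv] at hnodup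
  obtain he | he | he := he
  · rw [he, map_zsmul_unit, h.map_leftNormed_eq_zero hn, smul_zero]
  · rw [he, map_zsmul_unit, h.map_twoTwoOne_eq_zero hn, smul_zero]
  · rw [he, map_zsmul_unit, h.map_threeTwo_eq_zero hn, smul_zero]

/-! ### Split octonions -/

/-- Zorn's vector matrices over `R`, an alternative algebra (the split octonions): matrices with
diagonal entries `a`, `b` in `R` and off-diagonal entries `u`, `v` in `R³`. -/
@[ext] structure Zorn (R : Type*) where
  a : R
  u : Fin 3 → R
  v : Fin 3 → R
  b : R

namespace Zorn

open Matrix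

variable {R : Type*} [CommRing R]

/-- The four entries of a vector matrix. -/
def equivProd (R : Type*) : Zorn R ≃ R × (Fin 3 → R) × (Fin 3 → R) × R where
  toFun x := (x.a, x.u, x.v, x.b)
  invFun p := ⟨p.1, p.2.1, p.2.2.1, p.2.2.2⟩

instance : AddCommGroup (Zorn R) := (equivProd R).addCommGroup

instance : Module R (Zorn R) := (equivProd R).module R

instance : Mul (Zorn R) where
  mul x y :=
    { a := x.a * y.a + x.u ⬝ᵥ y.v
      u := x.a • y.u + y.b • x.u - x.v ⨯₃ y.v
      v := y.a • x.v + x.b • y.v + x.u ⨯₃ y.u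
      b := x.v ⬝ᵥ y.u + x.b * y.b }

section Entries

variable (r : R) (x y : Zorn R)

@[simp] theorem zero_a : (0 : Zorn R).a = 0 := rfl
@[simp] theorem zero_u : (0 : Zorn R).u = 0 := rfl
@[simp] theorem zero_v : (0 : Zorn R).v = 0 := rfl
@[simp] theorem zero_b : (0 : Zorn R).b = 0 := rfl
@[simp] theorem add_a : (x + y).a = x.a + y.a := rfl
@[simp] theorem add_u : (x + y).u = x.u + y.u := rfl
@[simp] theorem add_v : (x + y).v = x.v + y.v := rfl
@[simp] theorem add_b : (x + y).b = x.b + y.b := rfl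
@[simp] theorem sub_a : (x - y).a = x.a - y.a := rfl
@[simp] theorem sub_u : (x - y).u = x.u - y.u := rfl
@[simp] theorem sub_v : (x - y).v = x.v - y.v := rfl
@[simp] theorem sub_b : (x - y).b = x.b - y.b := rfl
@[simp] theorem smul_a : (r • x).a = r * x.a := rfl
@[simp] theorem smul_u : (r • x).u = r • x.u := rfl
@[simp] theorem smul_v : (r • x).v = r • x.v := rfl
@[simp] theorem smul_b : (r • x).b = r * x.b := rfl
@[simp] theorem mul_a : (x * y).a = x.a * y.a + x.u ⬝ᵥ y.v := rfl
@[simp] theorem mul_u : (x * y).u = x.a • y.u + y.b • x.u - x.v ⨯₃ y.v := rfl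
@[simp] theorem mul_v : (x * y).v = y.a • x.v + x.b • y.v + x.u ⨯₃ y.u := rfl
@[simp] theorem mul_b : (x * y).b = x.v ⬝ᵥ y.u + x.b * y.b := rfl

end Entries

instance : NonUnitalNonAssocRing (Zorn R) where
  left_distrib x y z := by ext <;> simp [add_mul] <;> ring
  right_distrib x y z := by ext <;> simp [add_mul] <;> ring
  zero_mul x := by ext <;> simp
  mul_zero x := by ext <;> simp

instance : SMulCommClass R (Zorn R) (Zorn R) where
  smul_comm r x y := by ext <;> simp <;> ring

instance : IsScalarTower R (Zorn R) (Zorn R) where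
  smul_assoc r x y := by ext <;> simp <;> ring

instance : IsAlternative (Zorn R) where
  associator_self_left x y := by
    ext i
    · simp [associator_apply, vec3_dotProduct, cross_apply, vecHead, vecTail]; ring
    · fin_cases i <;>
        simp [associator_apply, vec3_dotProduct, cross_apply, vecHead, vecTail] <;> ring
    · fin_cases i <;>
        simp [associator_apply, vec3_dotProduct, cross_apply, vecHead, vecTail] <;> ring
    · simp [associator_apply, vec3_dotProduct, cross_apply, vecHead, vecTail]; ring
  associator_self_right x y := by
    ext i
    · simp [associator_apply, vec3_dotProduct, cross_apply, vecHead, vecTail]; ring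
    · fin_cases i <;>
        simp [associator_apply, vec3_dotProduct, cross_apply, vecHead, vecTail] <;> ring
    · fin_cases i <;>
        simp [associator_apply, vec3_dotProduct, cross_apply, vecHead, vecTail] <;> ring
    · simp [associator_apply, vec3_dotProduct, cross_apply, vecHead, vecTail]; ring

section Coefficients

open CommutatorAlgebra

/-- The basis `h, u₀, u₁, u₂, v₀, v₁, v₂` of the vector matrices of trace zero. -/
def basis (R : Type*) [CommRing R] : Fin 7 → Zorn R :=
  ![⟨1, 0, 0, -1⟩, ⟨0, ![1, 0, 0], 0, 0⟩, ⟨0, ![0, 1, 0], 0, 0⟩, ⟨0, ![0, 0, 1], 0, 0⟩,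
    ⟨0, 0, ![1, 0, 0], 0⟩, ⟨0, 0, ![0, 1, 0], 0⟩, ⟨0, 0, ![0, 0, 1], 0⟩]

/-- Commutators of basis elements are multiples of basis elements: `bracketCoeff i j` is the factor
in `⁅basis i, basis j⁆`. -/
def bracketCoeff : Matrix (Fin 7) (Fin 7) ℤ :=
  !![0, 2, 2, 2, -2, -2, -2;
    -2, 0, 2, -2, 1, 0, 0;
    -2, -2, 0, 2, 0, 1, 0;
    -2, 2, -2, 0, 0, 0, 1;
    2, -1, 0, 0, 0, -2, 2;
    2, 0, -1, 0, 2, 0, -2;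
    2, 0, 0, -1, -2, 2, 0]

/-- The index of the basis element of which `⁅basis i, basis j⁆` is a multiple; the value is
immaterial where the commutator vanishes. -/
def bracketIndex : Matrix (Fin 7) (Fin 7) (Fin 7) :=
  !![0, 1, 2, 3, 4, 5, 6;
    1, 0, 6, 5, 0, 0, 0;
    2, 6, 0, 4, 0, 0, 0;
    3, 5, 4, 0, 0, 0, 0;
    4, 0, 0, 0, 0, 3, 2;
    5, 0, 0, 0, 3, 0, 1;
    6, 0, 0, 0, 2, 1, 0]

/-- The coefficient of `u₀` in the left-normed commutator of five basis elements. -/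
def leftNormedCoeff (a b c d e : Fin 7) : ℤ :=
  let i := bracketIndex a b
  let j := bracketIndex i c
  let k := bracketIndex j d
  if bracketIndex k e = 1 then
    bracketCoeff a b * bracketCoeff i c * bracketCoeff j d * bracketCoeff k e
  else 0

/-- The coefficient of `u₀` in `(J(g₀, g₁, g₂) g₃) g₄` for basis elements `gᵢ`. -/
def jacobianWordCoeff (g : Fin 5 → Fin 7) : ℤ :=
  leftNormedCoeff (g 0) (g 1) (g 2) (g 3) (g 4) + leftNormedCoeff (g 1) (g 2) (g 0) (g 3) (g 4)
    + leftNormedCoeff (g 2) (g 0) (g 1) (g 3) (g 4)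

variable (R)

set_option maxHeartbeats 1000000 in
-- 49 pairs of basis elements, four entries each
theorem lie_basis (i j : Fin 7) :
    ⁅basis R i, basis R j⁆ = (bracketCoeff i j : R) • basis R (bracketIndex i j) := by
  fin_cases i <;> fin_cases j <;> ext1 <;>
    simp [Ring.lie_def, basis, bracketCoeff, bracketIndex, cross_apply, vecHead, vecTail,
      -neg_smul] <;>
    norm_num

theorem basis_u_zero (i : Fin 7) : (basis R i).u 0 = if i = 1 then 1 else 0 := by
  fin_cases i <;> simp [basis]

theorem of_smul_basis_mul (r : R) (i j : Fin 7) :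
    of (r • basis R i) * of (basis R j) =
      of ((r * bracketCoeff i j) • basis R (bracketIndex i j)) := by
  rw [of_mul_of, mul_smul, ← lie_basis, Ring.lie_def, Ring.lie_def, smul_mul_assoc, mul_smul_comm,
    smul_sub]

theorem leftNormed_basis (g : Fin 5 → Fin 7) (a b c d e : Fin 5) :
    (of.symm (leftNormed (fun i ↦ of (basis R (g i))) a b c d e)).u 0 =
      leftNormedCoeff (g a) (g b) (g c) (g d) (g e) := by
  rw [leftNormed, of_mul_of, lie_basis, of_smul_basis_mul, of_smul_basis_mul, of_smul_basis_mul,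
    AddEquiv.symm_apply_apply, smul_u, Pi.smul_apply, basis_u_zero, leftNormedCoeff]
  split_ifs <;> simp

theorem jacobianWord_basis (g : Fin 5 → Fin 7) :
    (of.symm (jacobianWord (fun i ↦ of (basis R (g i))) 0 1 2 3 4)).u 0 = jacobianWordCoeff g := by
  simp only [jacobianWord_eq, map_add, add_u, Pi.add_apply, leftNormed_basis, jacobianWordCoeff,
    Int.cast_add]

end Coefficients

/-- Weighted substitutions of basis elements for the five variables, found by computer search, whose
sum in `sum_separatingSubstitutions` picks out one jacobian word. -/
def separatingSubstitutions : Fin 9 → ℤ × (Fin 5 → Fin 7) :=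
  ![(-8, ![3, 1, 1, 4, 6]), (15, ![5, 6, 0, 3, 6]), (-1, ![1, 5, 2, 4, 1]),
    (-4, ![1, 5, 5, 2, 2]), (-9, ![3, 0, 6, 1, 0]), (1, ![1, 1, 5, 2, 4]),
    (-6, ![2, 6, 1, 3, 5]), (11, ![2, 1, 5, 1, 4]), (-11, ![4, 5, 2, 1, 1])]

theorem sum_separatingSubstitutions : ∀ ρ : Equiv.Perm (Fin 5),
    ∑ k, (separatingSubstitutions k).1 * jacobianWordCoeff ((separatingSubstitutions k).2 ∘ ρ) =
      if ρ 3 = 3 ∧ ρ 4 = 4 then 864 * (ρ.sign : ℤ) else 0 := by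
  decide +kernel

end Zorn

/-! ### Commutator identities of alternative algebras -/

section CommutatorIdentities

open CommutatorAlgebra

namespace BTree

variable {n : ℕ}

theorem eval_of {A : Type} [NonUnitalNonAssocRing A] (y : Fin n → A) (t : BTree n) :
    t.eval (· * ·) (fun i ↦ of (y i)) = of (t.eval (fun a b ↦ ⁅a, b⁆) y) := by
  induction t with
  | leaf i => rfl
  | node s t hs ht => simp only [eval, hs, ht, of_mul_of]

theorem map_eval {V W F : Type} [Mul V] [Mul W] [FunLike F V W] [MulHomClass F V W] (φ : F)
    (x : Fin n → V) (t : BTree n) :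
    φ (t.eval (· * ·) x) = t.eval (· * ·) fun i ↦ φ (x i) := by
  induction t with
  | leaf i => rfl
  | node s t hs ht => simp only [eval, map_mul, hs, ht]

end BTree

/-- The polynomial `P` vanishes in every alternative `K`-algebra when the operation is interpreted
as the commutator. -/
def IsCommutatorIdentity {n : ℕ} (K : Type) [Field K] (P : BTree n →₀ K) : Prop :=
  ∀ (A : Type) [NonUnitalNonAssocRing A] [IsAlternative A] [Module K A] [SMulCommClass K A A]
    [IsScalarTower K A A] (y : Fin n → A),
    P.sum (fun t k ↦ k • t.eval (fun a b ↦ ⁅a, b⁆) y) = 0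

section Correction

variable {K V W A : Type} [Field K] [NonUnitalNonAssocRing V] [AddCommGroup W] [Module K W]
  [NonUnitalNonAssocRing A] [Module K A]

instance [IsMalcev V] {U : Type} [NonUnitalNonAssocRing U] [IsMalcev U] : IsMalcev (V × U) where
  anticomm _ _ := Prod.ext (IsMalcev.anticomm _ _) (IsMalcev.anticomm _ _)
  sagle _ _ _ _ := Prod.ext (IsMalcev.sagle _ _ _ _) (IsMalcev.sagle _ _ _ _)

/-- The map `(v, a) ↦ φ v - ψ a` on `V × A⁻`. When `A` is alternative, it has the same value as
`φ` on a commutator identity, while `ψ` can be chosen to make it vanish on given monomials. -/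
def corrected (φ : V →+ W) (ψ : A →ₗ[K] W) : V × CommutatorAlgebra A →+ W :=
  φ.coprod (-ψ.toAddMonoidHom.comp of.symm.toAddMonoidHom)

theorem corrected_apply (φ : V →+ W) (ψ : A →ₗ[K] W) (p : V × CommutatorAlgebra A) :
    corrected φ ψ p = φ p.1 - ψ (of.symm p.2) := by
  simp [corrected, sub_eq_add_neg]

theorem corrected_jacobianWord (φ : V →+ W) (ψ : A →ₗ[K] W) (x : Fin 5 → V) (y : Fin 5 → A)
    (a b c d e : Fin 5) :
    corrected φ ψ (jacobianWord (fun i ↦ (x i, of (y i))) a b c d e) =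
      φ (jacobianWord x a b c d e) - ψ (of.symm (jacobianWord (fun i ↦ of (y i)) a b c d e)) :=
  corrected_apply φ ψ _

theorem IsCommutatorIdentity.sum_corrected_eval {n : ℕ} [IsAlternative A] [SMulCommClass K A A]
    [IsScalarTower K A A] {P : BTree n →₀ K} (hP : IsCommutatorIdentity K P) (φ : V →+ W)
    (ψ : A →ₗ[K] W) (x : Fin n → V) (y : Fin n → A) :
    P.sum (fun t k ↦ k • corrected φ ψ (t.eval (· * ·) fun i ↦ (x i, of (y i)))) =
      P.sum fun t k ↦ k • φ (t.eval (· * ·) x) := by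
  have hsnd (t : BTree n) :
      (t.eval (· * ·) fun i ↦ (x i, of (y i))).2 = of (t.eval (fun a b ↦ ⁅a, b⁆) y) :=
    (t.map_eval (MulHom.snd V (CommutatorAlgebra A)) _).trans (t.eval_of y)
  have hfst (t : BTree n) : (t.eval (· * ·) fun i ↦ (x i, of (y i))).1 = t.eval (· * ·) x :=
    t.map_eval (MulHom.fst V (CommutatorAlgebra A)) _
  have hψ := congrArg ψ (hP A y)
  rw [map_finsuppSum, map_zero] at hψ
  simp only [map_smul] at hψ
  simp only [corrected_apply, hfst, hsnd, AddEquiv.symm_apply_apply, smul_sub, Finsupp.sum_sub, hψ,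
    sub_zero]

end Correction

section AssociativeWords

variable {K W : Type} [Field K] [AddCommGroup W] [Module K W]

instance (A : Type*) [NonUnitalRing A] : IsAlternative A where
  associator_self_left a b := by rw [associator_apply, mul_assoc, sub_self]
  associator_self_right a b := by rw [associator_apply, mul_assoc, sub_self]

theorem jacobian_of_eq_zero {A : Type*} [NonUnitalRing A] (a b c : A) :
    jacobian (of a) (of b) (of c) = 0 := by
  rw [jacobian_of, associator_apply, mul_assoc, sub_self, smul_zero, map_zero]

theorem basisFreeMonoid_ofList {X : Type*} (l : List X) :
    FreeAlgebra.basisFreeMonoid K X (.ofList l) = (l.map (FreeAlgebra.ι K)).prod := by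
  simp [FreeAlgebra.basisFreeMonoid, FreeAlgebra.equivMonoidAlgebraFreeMonoid,
    FreeMonoid.lift_apply]

theorem exists_linearMap_freeAlgebra {X : Type*} (f : List X → W) :
    ∃ ψ : FreeAlgebra K X →ₗ[K] W, ∀ l : List X, ψ (l.map (FreeAlgebra.ι K)).prod = f l := by
  refine ⟨(FreeAlgebra.basisFreeMonoid K X).constr K fun w ↦ f w.toList, fun l ↦ ?_⟩
  rw [← basisFreeMonoid_ofList, Module.Basis.constr_basis, FreeMonoid.toList_ofList]

/-- Among the associative words in the expansion of a left-normed commutator starting with `x₀`,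
only `x₀ x_b x_c x_d x_e` starts with `x₀`. -/
theorem exists_linearMap_leftNormed (F : Fin 5 → Fin 5 → Fin 5 → Fin 5 → W) :
    ∃ ψ : FreeAlgebra K (Fin 5) →ₗ[K] W, ∀ b c d e, 0 ∉ [b, c, d, e] →
      ψ (of.symm (leftNormed (fun i ↦ of (FreeAlgebra.ι K i)) 0 b c d e)) = F b c d e := by
  obtain ⟨ψ, hψ⟩ := exists_linearMap_freeAlgebra (K := K) fun l : List (Fin 5) ↦
    match l with
    | [a, b, c, d, e] => if a = 0 then F b c d e else 0
    | _ => 0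
  refine ⟨ψ, fun b c d e hn ↦ ?_⟩
  have hword (a b c d e : Fin 5) :
      ψ (FreeAlgebra.ι K a * FreeAlgebra.ι K b * FreeAlgebra.ι K c * FreeAlgebra.ι K d *
        FreeAlgebra.ι K e) = if a = 0 then F b c d e else 0 := by
    exact (congrArg ψ (by simp [mul_assoc])).trans (hψ [a, b, c, d, e])
  simp only [List.mem_cons, not_or, eq_comm (a := (0 : Fin 5))] at hn
  simp only [leftNormed, of_mul_of, AddEquiv.symm_apply_apply, Ring.lie_def, sub_mul,
    ← mul_assoc, map_sub, hword, hn, if_true, if_false, sub_zero]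

end AssociativeWords

theorem IsCommutatorIdentity.sum_map_eval_eq_zero_of_jacobianWord {K V W : Type} [Field K]
    [NonUnitalNonAssocRing V] [IsMalcev V] [AddCommGroup W] [Module K W] (h6 : (6 : K) ≠ 0)
    {P : BTree 5 →₀ K} (hP : IsCommutatorIdentity K P) (hml : ∀ t ∈ P.support, t.Multilinear)
    {φ : V →+ W} {x : Fin 5 → V}
    (hφ : ∀ a b c d e, [a, b, c, d, e].Nodup → φ (jacobianWord x a b c d e) = 0) :
    P.sum (fun t k ↦ k • φ (t.eval (· * ·) x)) = 0 := by
  have : IsSixTorsionFree W := .of_six_ne_zero W h6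
  obtain ⟨ψ, hψ⟩ := exists_linearMap_leftNormed (K := K) fun b c d e ↦ φ (leftNormed x 0 b c d e)
  have hkill : KillsNormalForms (corrected φ ψ) fun i ↦ (x i, of (FreeAlgebra.ι K i)) :=
    { jacobian a b c d e hn := by
        rw [corrected_jacobianWord, hφ a b c d e hn, jacobianWord, jacobian_of_eq_zero, zero_mul,
          zero_mul, map_zero, map_zero, sub_zero]
      leftNormed_zero b c d e hn := by
        rw [corrected_apply]
        exact sub_eq_zero.2 (hψ b c d e (List.nodup_cons.1 hn).1).symm }
  rw [← hP.sum_corrected_eval φ ψ x (FreeAlgebra.ι K)]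
  exact Finset.sum_eq_zero fun t ht ↦ smul_eq_zero_of_right _ (hkill.map_eval_eq_zero (hml t ht))

section SeparatingSubstitutions

open Equiv

theorem jacobian_rotate {V : Type*} [NonUnitalNonAssocRing V] (a b c : V) :
    jacobian b c a = jacobian a b c := by
  simp only [jacobian]
  abel

theorem jacobian_swap {V : Type*} [NonUnitalNonAssocRing V] [IsMalcev V] (a b c : V) :
    jacobian b a c = -jacobian a b c := by
  simp only [jacobian, IsMalcev.anticomm b a, IsMalcev.anticomm a c, IsMalcev.anticomm c b, neg_mul]
  abel

theorem jacobianWord_comp_perm {V : Type*} [NonUnitalNonAssocRing V] [IsMalcev V] (x : Fin 5 → V)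
    {ρ : Perm (Fin 5)} (h : ρ 3 = 3 ∧ ρ 4 = 4) :
    jacobianWord (x ∘ ρ) 0 1 2 3 4 = (ρ.sign : ℤ) • jacobianWord x 0 1 2 3 4 := by
  have hρ : ρ 0 = 0 ∧ ρ 1 = 1 ∧ ρ 2 = 2 ∧ ρ.sign = 1 ∨ ρ 0 = 1 ∧ ρ 1 = 2 ∧ ρ 2 = 0 ∧ ρ.sign = 1 ∨
      ρ 0 = 2 ∧ ρ 1 = 0 ∧ ρ 2 = 1 ∧ ρ.sign = 1 ∨ ρ 0 = 1 ∧ ρ 1 = 0 ∧ ρ 2 = 2 ∧ ρ.sign = -1 ∨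
      ρ 0 = 0 ∧ ρ 1 = 2 ∧ ρ 2 = 1 ∧ ρ.sign = -1 ∨ ρ 0 = 2 ∧ ρ 1 = 1 ∧ ρ 2 = 0 ∧ ρ.sign = -1 := by
    revert ρ; decide +kernel
  simp only [jacobianWord, Function.comp_apply, h]
  obtain ⟨h0, h1, h2, hs⟩ | ⟨h0, h1, h2, hs⟩ | ⟨h0, h1, h2, hs⟩ | ⟨h0, h1, h2, hs⟩ |
    ⟨h0, h1, h2, hs⟩ | ⟨h0, h1, h2, hs⟩ := hρ <;>
  simp [h0, h1, h2, hs, jacobian_swap (x 0) (x 1), jacobian_rotate (x 0),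
    jacobian_rotate (x 2), jacobian_swap (x 0) (x 2)]

theorem exists_perm_eq_of_nodup {n : ℕ} {g : Fin n → Fin n} (h : (List.ofFn g).Nodup) :
    ∃ σ : Perm (Fin n), ⇑σ = g :=
  ⟨.ofBijective g (Finite.injective_iff_bijective.1 (List.nodup_ofFn.1 h)), rfl⟩

instance {ι : Type*} {A : ι → Type*} [∀ i, NonUnitalNonAssocRing (A i)] [∀ i, IsAlternative (A i)] :
    IsAlternative (∀ i, A i) where
  associator_self_left _ _ := funext fun _ ↦ IsAlternative.associator_self_left _ _
  associator_self_right _ _ := funext fun _ ↦ IsAlternative.associator_self_right _ _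

/-- Vector matrices realizing the substitutions of `Zorn.separatingSubstitutions` and all their
permutations at once. -/
def separatingPoint (K : Type) [Field K] (i : Fin 5) : Perm (Fin 5) × Fin 9 → Zorn K :=
  fun p ↦ Zorn.basis K ((Zorn.separatingSubstitutions p.2).2 (p.1 i))

theorem jacobianWord_pi_apply {ι A : Type*} [NonUnitalNonAssocRing A] (y : Fin 5 → ι → A) (p : ι)
    (a b c d e : Fin 5) :
    of.symm (jacobianWord (fun i ↦ of (y i)) a b c d e) p =
      of.symm (jacobianWord (fun i ↦ of (y i p)) a b c d e) :=
  rfl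

theorem jacobianWord_separatingPoint (K : Type) [Field K] (σ τ : Perm (Fin 5)) (k : Fin 9) :
    (of.symm (jacobianWord (fun i ↦ of (separatingPoint K (σ i))) 0 1 2 3 4) (τ, k)).u 0 =
      Zorn.jacobianWordCoeff ((Zorn.separatingSubstitutions k).2 ∘ ⇑(τ * σ)) := by
  have hp (i : Fin 5) : separatingPoint K (σ i) (τ, k) =
      Zorn.basis K (((Zorn.separatingSubstitutions k).2 ∘ ⇑(τ * σ)) i) := rfl
  rw [jacobianWord_pi_apply]
  simp only [hp, Zorn.jacobianWord_basis]

variable {V W : Type} [NonUnitalNonAssocRing V] [IsMalcev V] [AddCommGroup W]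

theorem sum_jacobianWord_comp_perm (φ : V →+ W) (x : Fin 5 → V) (σ : Perm (Fin 5)) :
    ∑ τ : Perm (Fin 5),
        (if (τ * σ) 3 = 3 ∧ (τ * σ) 4 = 4 then 864 * ((τ * σ).sign : ℤ) else 0) •
          φ (jacobianWord (x ∘ ⇑τ⁻¹) 0 1 2 3 4) =
      (5184 : ℤ) • φ (jacobianWord (x ∘ σ) 0 1 2 3 4) := by
  have hterm (ρ : Perm (Fin 5)) :
      (if ρ 3 = 3 ∧ ρ 4 = 4 then 864 * (ρ.sign : ℤ) else 0) •
          φ (jacobianWord (x ∘ ⇑(ρ * σ⁻¹)⁻¹) 0 1 2 3 4) =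
        (if ρ 3 = 3 ∧ ρ 4 = 4 then 864 else 0 : ℤ) • φ (jacobianWord (x ∘ σ) 0 1 2 3 4) := by
    split_ifs with h
    · have hinv : ρ⁻¹ 3 = 3 ∧ ρ⁻¹ 4 = 4 := by
        rwa [Perm.inv_eq_iff_eq, Perm.inv_eq_iff_eq, eq_comm, eq_comm (a := (4 : Fin 5))]
      rw [mul_inv_rev, inv_inv, Perm.coe_mul, ← Function.comp_assoc, jacobianWord_comp_perm _ hinv,
        Perm.sign_inv, map_zsmul, smul_smul, mul_assoc, ← Units.val_mul, Int.units_mul_self]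
      simp
    · simp
  -- six permutations fix 3 and 4, and `5184 = 6 * 864`
  have hcount : ∑ ρ : Perm (Fin 5), (if ρ 3 = 3 ∧ ρ 4 = 4 then 864 else 0 : ℤ) = 5184 := by
    decide +kernel
  rw [← hcount, Finset.sum_smul]
  exact Fintype.sum_equiv (Equiv.mulRight σ) _ _ fun τ ↦ by
    rw [← hterm, Equiv.coe_mulRight, mul_inv_cancel_right]

theorem exists_linearMap_jacobianWord {K : Type} [Field K] [Module K W] (h6 : (6 : K) ≠ 0)
    (φ : V →+ W) (x : Fin 5 → V) :
    ∃ ψ : (Perm (Fin 5) × Fin 9 → Zorn K) →ₗ[K] W, ∀ a b c d e, [a, b, c, d, e].Nodup →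
      ψ (of.symm (jacobianWord (fun i ↦ of (separatingPoint K i)) a b c d e)) =
        φ (jacobianWord x a b c d e) := by
  let ψ : (Perm (Fin 5) × Fin 9 → Zorn K) →ₗ[K] W :=
    { toFun a := (5184 : K)⁻¹ • ∑ τ, ∑ k,
        ((Zorn.separatingSubstitutions k).1 * (a (τ, k)).u 0) •
          φ (jacobianWord (x ∘ ⇑τ⁻¹) 0 1 2 3 4)
      map_add' a b := by
        simp only [Pi.add_apply, Zorn.add_u, mul_add, add_smul, Finset.sum_add_distrib, smul_add]
      map_smul' r a := by
        simp only [Pi.smul_apply, Zorn.smul_u, smul_eq_mul, mul_left_comm _ r, mul_smul,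
          ← Finset.smul_sum, RingHom.id_apply]
        rw [smul_comm] }
  refine ⟨ψ, fun a b c d e hn ↦ ?_⟩
  obtain ⟨σ, hσ⟩ := exists_perm_eq_of_nodup (g := ![a, b, c, d, e]) (by simpa using hn)
  have hword {U : Type} [NonUnitalNonAssocRing U] (z : Fin 5 → U) :
      jacobianWord z a b c d e = jacobianWord (z ∘ σ) 0 1 2 3 4 := by
    rw [hσ]; rfl
  have hψ : ψ (of.symm (jacobianWord (fun i ↦ of (separatingPoint K i)) a b c d e)) =
      (5184 : K)⁻¹ • ∑ τ : Perm (Fin 5), (∑ k, (Zorn.separatingSubstitutions k).1 *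
        Zorn.jacobianWordCoeff ((Zorn.separatingSubstitutions k).2 ∘ ⇑(τ * σ))) •
          φ (jacobianWord (x ∘ ⇑τ⁻¹) 0 1 2 3 4) := by
    rw [hword]
    simp only [ψ, LinearMap.coe_mk, AddHom.coe_mk, Function.comp_def,
      jacobianWord_separatingPoint, ← Int.cast_mul, Int.cast_smul_eq_zsmul, Finset.sum_smul]
  simp only [Zorn.sum_separatingSubstitutions, sum_jacobianWord_comp_perm] at hψ
  have h5184 : (5184 : K) ≠ 0 := fun h ↦ pow_ne_zero 6 h6 (by linear_combination 9 * h)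
  rw [hψ, hword, ← Int.cast_smul_eq_zsmul K, Int.cast_ofNat, inv_smul_smul₀ h5184]

end SeparatingSubstitutions

theorem IsCommutatorIdentity.sum_map_eval_eq_zero {K V W : Type} [Field K]
    [NonUnitalNonAssocRing V] [IsMalcev V] [AddCommGroup W] [Module K W] (h6 : (6 : K) ≠ 0)
    {P : BTree 5 →₀ K} (hP : IsCommutatorIdentity K P) (hml : ∀ t ∈ P.support, t.Multilinear)
    (φ : V →+ W) (x : Fin 5 → V) :
    P.sum (fun t k ↦ k • φ (t.eval (· * ·) x)) = 0 := by
  obtain ⟨ψ, hψ⟩ := exists_linearMap_jacobianWord h6 φ x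
  rw [← hP.sum_corrected_eval φ ψ x (separatingPoint K)]
  refine hP.sum_map_eval_eq_zero_of_jacobianWord h6 hml fun a b c d e hn ↦ ?_
  rw [corrected_jacobianWord, hψ a b c d e hn, sub_self]

end CommutatorIdentities

/-! ### The center of a dialgebra monomial -/

section Dicommutator

variable {n : ℕ}

/-- The polynomial `P` vanishes in every alternative dialgebra over `K`, with left product `l` and
right product `r`, when the operation is interpreted as the dicommutator. -/
def IsDicommutatorIdentity (K : Type) [Field K] (P : BTree n →₀ K) : Prop :=
  ∀ (D : Type) [AddCommGroup D] [Module K D] (l r : D →ₗ[K] D →ₗ[K] D),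
    (∀ a b c : D, r (l a b) c = r (r a b) c) →
    (∀ a b c : D, l a (l b c) = l a (r b c)) →
    (∀ a b c : D, (l (l a b) c - l a (l b c)) + (r (r c b) a - r c (r b a)) = 0) →
    (∀ a b c : D, (l (l a b) c - l a (l b c)) - (r (r b c) a - r b (r c a)) = 0) →
    (∀ a b c : D, (l (r a b) c - r a (l b c)) + (r (r a c) b - r a (r c b)) = 0) →
    ∀ x : Fin n → D, P.sum (fun t k ↦ k • t.eval (fun a b ↦ l a b - r b a) x) = 0

/-- The center of a dialgebra monomial formed with the dicommutator: its leftmost variable. -/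
def BTree.center : BTree n → Fin n
  | leaf i => i
  | node s _ => s.center

theorem BTree.center_mem_vars (t : BTree n) : t.center ∈ t.vars := by
  induction t with
  | leaf i => exact Multiset.mem_singleton_self i
  | node s t hs _ => exact Multiset.mem_add.2 (.inl hs)

section Split

variable (K A : Type) [Field K] [NonUnitalNonAssocRing A] [Module K A] [SMulCommClass K A A]
  [IsScalarTower K A A]

/-- The left product of the dialgebra `A × A`, in which the second factor is a copy of the bimodule
`A` and carries the center. -/
def splitLeft : A × A →ₗ[K] A × A →ₗ[K] A × A :=
  .mk₂ K (fun p q ↦ (p.1 * q.1, p.2 * q.1)) (fun _ _ _ ↦ by simp [add_mul])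
    (fun _ _ _ ↦ by simp [smul_mul_assoc]) (fun _ _ _ ↦ by simp [mul_add])
    (fun _ _ _ ↦ by simp [mul_smul_comm])

/-- The right product of the dialgebra `A × A` of `splitLeft`. -/
def splitRight : A × A →ₗ[K] A × A →ₗ[K] A × A :=
  .mk₂ K (fun p q ↦ (p.1 * q.1, p.1 * q.2)) (fun _ _ _ ↦ by simp [add_mul])
    (fun _ _ _ ↦ by simp [smul_mul_assoc]) (fun _ _ _ ↦ by simp [mul_add])
    (fun _ _ _ ↦ by simp [mul_smul_comm])

variable {A}

@[simp]
theorem splitLeft_apply (p q : A × A) : splitLeft K A p q = (p.1 * q.1, p.2 * q.1) := rfl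

@[simp]
theorem splitRight_apply (p q : A × A) : splitRight K A p q = (p.1 * q.1, p.1 * q.2) := rfl

theorem BTree.eval_split (y : Fin n → A) (i : Fin n) (t : BTree n) :
    t.eval (fun p q ↦ splitLeft K A p q - splitRight K A q p)
        (fun j ↦ (y j, if j = i then y j else 0)) =
      (t.eval (fun a b ↦ ⁅a, b⁆) y,
        if t.center = i then t.eval (fun a b ↦ ⁅a, b⁆) y else 0) := by
  induction t with
  | leaf j => rfl
  | node s t hs ht =>
    simp only [eval, hs, ht]
    by_cases hc : s.center = i <;> simp [center, hc, Ring.lie_def]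

end Split

theorem IsDicommutatorIdentity.isCommutatorIdentity_filter {K : Type} [Field K] {P : BTree n →₀ K}
    (hP : IsDicommutatorIdentity K P) (i : Fin n) :
    IsCommutatorIdentity K (P.filter (·.center = i)) := by
  intro A _ _ _ _ _ y
  have hreverse (a b c : A) : associator a b c + associator c b a = 0 := by
    rw [← associator_rotate c b a, associator_swap_left, neg_add_cancel]
  have hrotate (a b c : A) : associator a b c - associator b c a = 0 := by
    rw [associator_rotate a b c, sub_self]
  have hswap (a b c : A) : associator a b c + associator a c b = 0 := by
    rw [associator_swap_right, neg_add_cancel]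
  have h := congrArg Prod.snd <| hP (A × A) (splitLeft K A) (splitRight K A) (fun _ _ _ ↦ rfl)
    (fun _ _ _ ↦ rfl) (fun _ _ _ ↦ Prod.ext (hreverse _ _ _) (hreverse _ _ _))
    (fun _ _ _ ↦ Prod.ext (hrotate _ _ _) (hrotate _ _ _))
    (fun _ _ _ ↦ Prod.ext (hswap _ _ _) (hswap _ _ _)) fun j ↦ (y j, if j = i then y j else 0)
  simp only [BTree.eval_split, Finsupp.sum, Prod.snd_sum, Prod.smul_snd, smul_ite, smul_zero,
    Prod.snd_zero] at h
  rwa [Finsupp.sum_filter_index, Finsupp.support_filter, Finset.sum_filter]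

end Dicommutator

/-! ### Malcev dialgebras -/

/-- A (right) Malcev dialgebra, without its scalars: a nonassociative ring satisfying right
anticommutativity and the di-Malcev identity. -/
class IsMalcevDialgebra (M : Type*) [NonUnitalNonAssocRing M] : Prop where
  mul_anticomm_right (a b c : M) : a * (b * c) = -(a * (c * b))
  diMalcev (a b c d : M) :
    a * b * c * d - a * d * b * c - a * (c * d) * b - a * c * (b * d) - a * (b * c * d) = 0

namespace IsMalcevDialgebra

variable (M : Type) [NonUnitalNonAssocRing M] [IsMalcevDialgebra M]

/-- Elements of a Malcev dialgebra are congruent when they have the same right multiplication. The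
quotient is a Malcev ring. -/
def rightActionCon : RingCon M where
  r x y := ∀ a, a * x = a * y
  iseqv := ⟨fun _ _ ↦ rfl, fun h a ↦ (h a).symm, fun h h' a ↦ (h a).trans (h' a)⟩
  add' h h' a := by rw [mul_add, mul_add, h, h']
  mul' {w x y z} h h' a := by
    rw [mul_anticomm_right, h, ← mul_anticomm_right, h']

variable {M}

theorem mk_surjective : Function.Surjective ((↑) : M → (rightActionCon M).Quotient) :=
  Quotient.mk''_surjective

theorem quotient_mul_anticomm (x y : (rightActionCon M).Quotient) : x * y = -(y * x) := by
  obtain ⟨a, rfl⟩ := mk_surjective x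
  obtain ⟨b, rfl⟩ := mk_surjective y
  exact (rightActionCon M).eq.2 fun c ↦ by rw [mul_anticomm_right, mul_neg]

instance : IsMalcev (rightActionCon M).Quotient where
  anticomm := quotient_mul_anticomm
  sagle x y z w := by
    obtain ⟨a, ha⟩ := mk_surjective x
    obtain ⟨b, hb⟩ := mk_surjective y
    obtain ⟨c, hc⟩ := mk_surjective z
    obtain ⟨d, hd⟩ := mk_surjective w
    have h := congrArg ((↑) : M → (rightActionCon M).Quotient) (diMalcev a b c d)
    simp only [RingCon.coe_sub, RingCon.coe_mul, RingCon.coe_zero, ha, hb, hc, hd] at h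
    rw [quotient_mul_anticomm x w, quotient_mul_anticomm x (z * w),
      quotient_mul_anticomm x (y * z * w), neg_mul, neg_mul, neg_mul] at h
    linear_combination (norm := abel) h

/-- The right action on `M` of its quotient ring. -/
def rightAction : (rightActionCon M).Quotient →+ M →+ M :=
  (rightActionCon M).toAddCon.lift AddMonoidHom.mul.flip fun _ _ h ↦ AddMonoidHom.ext h

@[simp]
theorem rightAction_mk (x a : M) : rightAction (x : (rightActionCon M).Quotient) a = a * x :=
  rfl

variable (M) in
/-- The split null extension of the quotient Malcev ring by `M`, a Malcev bimodule under the right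
action and its negative on the left. -/
def SplitNull : Type := (rightActionCon M).Quotient × M

namespace SplitNull

instance : AddCommGroup (SplitNull M) :=
  inferInstanceAs (AddCommGroup ((rightActionCon M).Quotient × M))

/-- The projection of the split null extension to the quotient ring. -/
def base : SplitNull M →+ (rightActionCon M).Quotient := AddMonoidHom.fst _ _

/-- The projection of the split null extension to the bimodule. -/
def val : SplitNull M →+ M := AddMonoidHom.snd _ _

@[ext]
theorem ext {p q : SplitNull M} (hbase : base p = base q) (hval : val p = val q) : p = q :=
  Prod.ext hbase hval

instance : Mul (SplitNull M) :=
  ⟨fun p q ↦ (base p * base q, rightAction (base q) (val p) - rightAction (base p) (val q))⟩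

@[simp]
theorem base_mul (p q : SplitNull M) : base (p * q) = base p * base q := rfl

@[simp]
theorem val_mul (p q : SplitNull M) :
    val (p * q) = rightAction (base q) (val p) - rightAction (base p) (val q) :=
  rfl

instance : NonUnitalNonAssocRing (SplitNull M) where
  left_distrib p q r := by ext <;> simp [mul_add, add_sub_add_comm]
  right_distrib p q r := by ext <;> simp [add_mul, add_sub_add_comm]
  zero_mul p := by ext <;> simp
  mul_zero p := by ext <;> simp

instance : IsMalcev (SplitNull M) where
  anticomm p q := by
    ext
    · simp [IsMalcev.anticomm (base p)]
    · simp
  sagle p q r s := by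
    ext
    · simp [IsMalcev.sagle (base p)]
    obtain ⟨a, ha⟩ := mk_surjective (base p)
    obtain ⟨b, hb⟩ := mk_surjective (base q)
    obtain ⟨c, hc⟩ := mk_surjective (base r)
    obtain ⟨d, hd⟩ := mk_surjective (base s)
    simp only [map_add, base_mul, val_mul, ← ha, ← hb, ← hc, ← hd, ← RingCon.coe_mul,
      rightAction_mk]
    simp only [sub_mul]
    rw [mul_anticomm_right (val q * d), mul_anticomm_right (val r * a)]
    linear_combination (norm := abel) diMalcev (val p) b c d + diMalcev (val q) c d a +
      diMalcev (val r) d a b + diMalcev (val s) a b c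

variable {n : ℕ}

/-- The point of the split null extension over `x` whose only nonzero bimodule coordinate is the
`i`-th. -/
def point (x : Fin n → M) (i j : Fin n) : SplitNull M :=
  (x j, if j = i then x j else 0)

theorem base_eval_point (x : Fin n → M) (i : Fin n) (t : BTree n) :
    base (t.eval (· * ·) (point x i)) = t.eval (· * ·) x := by
  induction t with
  | leaf j => rfl
  | node s t hs ht => simp [BTree.eval, hs, ht]

theorem val_eval_point_of_notMem (x : Fin n → M) {i : Fin n} {t : BTree n} (h : i ∉ t.vars) :
    val (t.eval (· * ·) (point x i)) = 0 := by
  induction t with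
  | leaf j => exact if_neg fun hj ↦ h (by simp [BTree.vars, hj])
  | node s t hs ht =>
    simp only [BTree.vars, Multiset.mem_add, not_or] at h
    simp [BTree.eval, hs h.1, ht h.2]

theorem val_eval_point_center (x : Fin n → M) {t : BTree n} (h : t.vars.Nodup) :
    val (t.eval (· * ·) (point x t.center)) = t.eval (· * ·) x := by
  induction t with
  | leaf j => exact if_pos rfl
  | node s t hs _ =>
    obtain ⟨hs', -, hst⟩ := Multiset.nodup_add.1 h
    have hc : s.center ∉ t.vars := Multiset.disjoint_left.1 hst s.center_mem_vars
    simp [BTree.eval, BTree.center, hs hs', val_eval_point_of_notMem x hc, base_eval_point]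

end SplitNull

end IsMalcevDialgebra

theorem IsDicommutatorIdentity.sum_eval_eq_zero {K M : Type} [Field K]
    [NonUnitalNonAssocRing M] [IsMalcevDialgebra M] [Module K M] (h6 : (6 : K) ≠ 0)
    {P : BTree 5 →₀ K} (hP : IsDicommutatorIdentity K P) (hml : ∀ t ∈ P.support, t.Multilinear)
    (x : Fin 5 → M) :
    P.sum (fun t k ↦ k • t.eval (· * ·) x) = 0 := by
  have hcenter (i : Fin 5) : ∑ t ∈ P.support with t.center = i, P t • t.eval (· * ·) x = 0 := by
    have h := (hP.isCommutatorIdentity_filter i).sum_map_eval_eq_zero h6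
      (fun t ht ↦ hml t (Finset.filter_subset _ _ ht)) IsMalcevDialgebra.SplitNull.val
      (IsMalcevDialgebra.SplitNull.point x i)
    rw [Finsupp.sum_filter_index, Finsupp.support_filter] at h
    rw [← h]
    refine Finset.sum_congr rfl fun t ht ↦ ?_
    obtain ⟨htP, rfl⟩ := Finset.mem_filter.1 ht
    have hnodup : t.vars.Nodup := hml t htP ▸ Finset.univ.nodup
    rw [IsMalcevDialgebra.SplitNull.val_eval_point_center x hnodup]
  rw [Finsupp.sum, ← Finset.sum_fiberwise _ BTree.center]
  exact Finset.sum_eq_zero fun i _ ↦ hcenter i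

theorem degree5_no_special_identities_general {K : Type} [Field K] (h6 : (6 : K) ≠ 0)
    {P : BTree 5 →₀ K} (hml : ∀ t ∈ P.support, t.Multilinear) (hP : IsDicommutatorIdentity K P) :
    ∀ (M : Type) [AddCommGroup M] [Module K M] (f : M →ₗ[K] M →ₗ[K] M),
      (∀ a b c : M, f a (f b c) + f a (f c b) = 0) →
      (∀ a b c d : M,
        f (f (f a b) c) d - f (f (f a d) b) c - f (f a (f c d)) b
          - f (f a c) (f b d) - f a (f (f b c) d) = 0) →
      ∀ x : Fin 5 → M, P.sum (fun t k ↦ k • t.eval (fun a b ↦ f a b) x) = 0 := by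
  intro M _ _ f hanticomm hdiMalcev x
  let _ : NonUnitalNonAssocRing M :=
    { ‹AddCommGroup M› with
      mul a b := f a b
      left_distrib a := map_add (f a)
      right_distrib := f.map_add₂
      zero_mul := f.map_zero₂
      mul_zero a := map_zero (f a) }
  have : IsMalcevDialgebra M :=
    { mul_anticomm_right a b c := eq_neg_of_add_eq_zero_left (hanticomm a b c)
      diMalcev := hdiMalcev }
  exact hP.sum_eval_eq_zero h6 hml x

/-- Over a field `K` of characteristic 0, every multilinear polynomial identity `P` of degree 5 satisfied by the dicommutator in every alternative dialgebra over `K` is satisfied in every Malcev dialgebra over `K`; there are no special identities for Malcev dialgebras in degree 5. -/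
theorem degree5_no_special_identities (K : Type) [Field K]
    [CharZero K]
    (P : BTree 5 →₀ K) (hml : ∀ t ∈ P.support, t.Multilinear)
    (hvanish : ∀ (D : Type) [AddCommGroup D] [Module K D]
      (l r : D →ₗ[K] D →ₗ[K] D),
      (∀ a b c : D, r (l a b) c = r (r a b) c) →
      (∀ a b c : D, l a (l b c) = l a (r b c)) →
      (∀ a b c : D, (l (l a b) c - l a (l b c)) + (r (r c b) a - r c (r b a)) = 0) →
      (∀ a b c : D, (l (l a b) c - l a (l b c)) - (r (r b c) a - r b (r c a)) = 0) →
      (∀ a b c : D, (l (r a b) c - r a (l b c)) + (r (r a c) b - r a (r c b)) = 0) →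
      ∀ x : Fin 5 → D,
        P.sum (fun t k => k • BTree.eval (fun a b => l a b - r b a) x t) = 0) :
    ∀ (M : Type) [AddCommGroup M] [Module K M] (f : M →ₗ[K] M →ₗ[K] M),
      (∀ a b c : M, f a (f b c) + f a (f c b) = 0) →
      (∀ a b c d : M,
        f (f (f a b) c) d - f (f (f a d) b) c - f (f a (f c d)) b
          - f (f a c) (f b d) - f a (f (f b c) d) = 0) →
      ∀ x : Fin 5 → M,
        P.sum (fun t k => k • BTree.eval (fun a b => f a b) x t) = 0 := by
  exact degree5_no_special_identities_general (by norm_num) hml hvanish
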